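/- Let h, k be relatively prime integers with 0 ≤ h < k, and fix a complex x with |x| < 1. The double series Q_{h,k}(s) = ∑_{m≥1} ∑_{l≥1} (x^l e^{2πi l m h/k}/l)·(lm)^{−s} converges absolutely for Re(s) > 1, and there exists a function Q̃ holomorphic on ℂ ∖ {1} that agrees with this series for Re(s) > 1, such that (s−1)·Q̃(s) extends holomorphically across s = 1 with value Li₂(x^k)/k² at s = 1 (i.e., Q̃ has a simple pole at s = 1 with residue Li₂(x^k)/k²), and Q̃(0) = (1/(2k))·ln(1 − x^k) + ∑_{l ≥ 1, k ∤ l} (x^l/l)·1/(e^{−2πi l h/k} − 1). -/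

import Mathlib

open Complex Filter Real

/-- The dilogarithm `Li₂(z) = ∑_{n=1}^∞ zⁿ/n²`. -/
noncomputable def dilog (z : ℂ) : ℂ := ∑' n : ℕ, z ^ (n + 1) / ((n : ℂ) + 1) ^ 2

/-- The term of the double series `Q_{h,k}(s)` indexed by `(m,l) = (p.1+1, p.2+1)`:
`(x^l e^{2πi l m h/k}/l)·(lm)^{-s}`. -/
noncomputable def Qterm (h k : ℕ) (x : ℂ) (s : ℂ) (p : ℕ × ℕ) : ℂ :=
  x ^ (p.2 + 1) * Complex.exp (2 * Real.pi * Complex.I * (p.2 + 1) * (p.1 + 1) * h / k) /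
    (p.2 + 1) * (((p.2 + 1) * (p.1 + 1) : ℂ)) ^ (-s)


open HurwitzZeta Topology in
theorem aux_bound (b σ : ℝ) (hb : 0 < b) (hb1 : b < 1) (hσ : 1 < σ) (hσ2 : σ < 2) (n : ℕ) :
    ((n:ℝ) + b) ^ (-σ) - ((n:ℝ) + 1) ^ (-σ) ≤ 2 / b ^ 2 * (1 / ((n:ℝ) + 1) ^ 2) := by
  set q : ℝ := (n:ℝ) + 1 with hq
  set p : ℝ := (n:ℝ) + b with hp
  have hn : (0:ℝ) ≤ n := n.cast_nonneg
  have hq1 : 1 ≤ q := by linarith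
  have hp0 : 0 < p := by linarith
  have hq0 : 0 < q := by linarith
  have hpq : p ≤ q := by linarith
  have hbq : b * q ≤ p := by rw [hq, hp]; nlinarith
  have h1 : q ^ (-σ) = p ^ (-σ) * (p / q) ^ σ := by
    rw [Real.div_rpow hp0.le hq0.le, Real.rpow_neg hp0.le, Real.rpow_neg hq0.le]
    have := (Real.rpow_pos_of_pos hp0 σ).ne'
    field_simp
  have h2 : (p / q) ^ 2 ≤ (p / q) ^ σ := by
    rw [← Real.rpow_natCast]
    exact Real.rpow_le_rpow_of_exponent_ge (by positivity) (by rw [div_le_one hq0]; exact hpq)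
      (by push_cast; linarith)
  have h3 : p ^ (-σ) ≤ b ^ (-2:ℝ) * q ^ (-1:ℝ) := by
    calc p ^ (-σ) ≤ (b * q) ^ (-σ) :=
          Real.rpow_le_rpow_of_nonpos (by positivity) hbq (by linarith)
      _ = b ^ (-σ) * q ^ (-σ) := Real.mul_rpow hb.le hq0.le
      _ ≤ _ := by
        apply mul_le_mul
        · exact Real.rpow_le_rpow_of_exponent_ge hb hb1.le (by linarith)
        · exact Real.rpow_le_rpow_of_exponent_le hq1 (by linarith)
        · positivity
        · positivity
  have h4 : 1 - (p / q) ^ 2 ≤ 2 / q := by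
    have : q - p ≤ 1 := by rw [hq, hp]; linarith
    rw [div_pow, sub_le_iff_le_add, div_add_div _ _ hq0.ne' (by positivity), le_div_iff₀ (by positivity)]
    nlinarith [mul_nonneg hq0.le (sub_nonneg.2 hpq), sq_nonneg (q - p), mul_pos hq0 hq0, mul_le_mul_of_nonneg_left this (mul_pos hq0 hq0).le, mul_nonneg (mul_pos hq0 hq0).le (sub_nonneg.2 hpq),
      mul_nonneg hq0.le (mul_nonneg (sub_nonneg.2 hpq) (sub_nonneg.2 hpq)), mul_nonneg hq0.le (mul_nonneg (sub_nonneg.2 hpq) (sub_nonneg.2 this))]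
  have h5 : (0:ℝ) ≤ 2 / q := by positivity
  calc p ^ (-σ) - q ^ (-σ) = p ^ (-σ) * (1 - (p / q) ^ σ) := by rw [h1]; ring
    _ ≤ p ^ (-σ) * (2 / q) := by
        apply mul_le_mul_of_nonneg_left _ (by positivity); linarith
    _ ≤ (b ^ (-2:ℝ) * q ^ (-1:ℝ)) * (2 / q) := mul_le_mul_of_nonneg_right h3 h5
    _ = _ := by
      rw [Real.rpow_neg hb.le, Real.rpow_neg_one]
      norm_cast
      field_simp

open HurwitzZeta Topology in
theorem aux_odd_one (a : ℝ) (ha : 0 < a) (ha1 : a < 1) :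
    hurwitzZetaOdd (a : UnitAddCircle) 1 = π * Complex.cot (π * a) / 2 := by
  have hz : (a : ℂ) ∈ Complex.integerComplement := by
    rintro ⟨n, hn⟩
    have : (n : ℝ) = a := by exact_mod_cast hn
    have h1 : (0 : ℤ) < n := by exact_mod_cast this ▸ ha
    have h2 : n < (1 : ℤ) := by exact_mod_cast this ▸ ha1
    omega
  let F : ℝ → ℕ → ℝ := fun σ n => ((n + a) ^ (-σ) - (n + 1 - a) ^ (-σ)) / 2
  have hF : ∀ σ : ℝ, 1 < σ → hurwitzZetaOdd (a : UnitAddCircle) σ = ((∑' n, F σ n : ℝ) : ℂ) := by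
    intro σ hσ
    rw [← (hasSum_nat_hurwitzZetaOdd_of_mem_Icc (a := a) ⟨ha.le, ha1.le⟩ (s := (σ : ℂ)) (by simpa using hσ)).tsum_eq, Complex.ofReal_tsum]
    congr 1; ext n
    have hn : (0:ℝ) ≤ n := n.cast_nonneg
    simp only [F]
    push_cast
    rw [Complex.ofReal_cpow (by linarith), Complex.ofReal_cpow (by linarith)]
    push_cast
    rw [Complex.cpow_neg, Complex.cpow_neg]; simp only [one_div]
  let b := min a (1 - a)
  have hb : 0 < b := lt_min ha (by linarith)
  have hba : b ≤ a := min_le_left _ _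
  have hba' : b ≤ 1 - a := min_le_right _ _
  have hb1 : b < 1 := by linarith
  have hbd : ∀ σ : ℝ, 1 < σ → σ < 2 → ∀ n, ‖F σ n‖ ≤ 2 / b ^ 2 * (1 / ((n:ℝ) + 1) ^ 2) := by
    intro σ hσ hσ2 n
    have hn : (0:ℝ) ≤ n := n.cast_nonneg
    have key := aux_bound b σ hb hb1 hσ hσ2 n
    have hm : ∀ u v : ℝ, 0 < u → u ≤ v → v ^ (-σ) ≤ u ^ (-σ) := fun u v hu huv =>
      Real.rpow_le_rpow_of_nonpos hu huv (by linarith)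
    have h1 := hm (n + b) (n + a) (by linarith) (by linarith)
    have h2 := hm (n + b) (n + 1 - a) (by linarith) (by linarith)
    have h3 := hm (n + a) (n + 1) (by linarith) (by linarith)
    have h4 := hm (n + 1 - a) (n + 1) (by linarith) (by linarith)
    simp only [F, Real.norm_eq_abs]
    rw [abs_le]
    have h5 : 0 ≤ 2 / b ^ 2 * (1 / ((n:ℝ) + 1) ^ 2) := by positivity
    constructor <;> linarith
  have hsum : Summable (fun n : ℕ => 2 / b ^ 2 * (1 / ((n:ℝ) + 1) ^ 2)) := by
    apply Summable.mul_left
    have := (summable_nat_add_iff 1).2 (Real.summable_one_div_nat_pow.2 (by norm_num : 1 < 2))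
    simpa using this
  have hcont : ∀ n, Tendsto (fun σ => F σ n) (𝓝 1) (𝓝 (F 1 n)) := by
    intro n
    have hn : (0:ℝ) ≤ n := n.cast_nonneg
    have : Continuous (fun σ => F σ n) := by
      simp only [F]
      have h1 : (n:ℝ) + a ≠ 0 := by linarith
      have h2 : (n:ℝ) + 1 - a ≠ 0 := by linarith
      refine ((Continuous.rpow continuous_const continuous_neg fun _ => Or.inl h1).sub (Continuous.rpow continuous_const continuous_neg fun _ => Or.inl h2)).div_const _
    exact this.tendsto 1
  have hev : ∀ᶠ σ : ℝ in 𝓝[>] 1, 1 < σ ∧ σ < 2 := by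
    have := Ioo_mem_nhdsGT (show (1:ℝ) < 2 by norm_num)
    filter_upwards [this] with σ hσ using hσ
  have hbd1 : ∀ n, ‖F 1 n‖ ≤ 2 / b ^ 2 * (1 / ((n:ℝ) + 1) ^ 2) := fun n =>
    le_of_tendsto ((hcont n).mono_left nhdsWithin_le_nhds).norm (hev.mono fun σ h => hbd σ h.1 h.2 n)
  have hs1 : Summable (F 1) := Summable.of_norm_bounded hsum hbd1
  have hlim := tendsto_tsum_of_dominated_convergence (𝓕 := 𝓝[>] (1:ℝ)) (f := F) (g := F 1) hsum
    (fun n => (hcont n).mono_left nhdsWithin_le_nhds) (hev.mono fun σ h => hbd σ h.1 h.2)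
  have hL : Tendsto (fun σ : ℝ => hurwitzZetaOdd (a : UnitAddCircle) σ) (𝓝[>] 1)
      (𝓝 (hurwitzZetaOdd (a : UnitAddCircle) 1)) := by
    have : Continuous (fun σ : ℝ => hurwitzZetaOdd (a : UnitAddCircle) σ) :=
      (differentiable_hurwitzZetaOdd _).continuous.comp Complex.continuous_ofReal
    simpa using (this.tendsto 1).mono_left nhdsWithin_le_nhds
  have hR : Tendsto (fun σ : ℝ => hurwitzZetaOdd (a : UnitAddCircle) σ) (𝓝[>] 1)
      (𝓝 ((∑' n, F 1 n : ℝ) : ℂ)) := by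
    refine ((Complex.continuous_ofReal.tendsto _).comp hlim).congr' (hev.mono fun σ h => ?_)
    simp [hF σ h.1]
  rw [tendsto_nhds_unique hL hR]
  -- telescoping
  have hp1 : Tendsto (fun N => ((∑ n ∈ Finset.range N, F 1 n : ℝ) : ℂ)) atTop
      (𝓝 ((∑' n, F 1 n : ℝ) : ℂ)) :=
    (Complex.continuous_ofReal.tendsto _).comp hs1.hasSum.tendsto_sum_nat
  have hp2 := (summable_cotTerm hz).hasSum.tendsto_sum_nat
  rw [show (∑' n, cotTerm (a:ℂ) n) = π * Complex.cot (π * a) - 1 / a by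
    rw [cot_series_rep' hz]] at hp2
  have hp3 : Tendsto (fun N : ℕ => (1 / ((N:ℂ) + a))) atTop (𝓝 0) := by
    have : Tendsto (fun N : ℕ => (1 / ((N:ℝ) + a))) atTop (𝓝 0) := by
      apply Tendsto.const_div_atTop
      exact tendsto_atTop_add_const_right _ _ tendsto_natCast_atTop_atTop
    have := (Complex.continuous_ofReal.tendsto _).comp this
    refine (this.congr fun N => ?_).trans_eq ?_ <;> simp
  have heq : ∀ N : ℕ, ((∑ n ∈ Finset.range N, F 1 n : ℝ) : ℂ) =
      (1 / a + (∑ n ∈ Finset.range N, cotTerm (a:ℂ) n) - 1 / ((N:ℂ) + a)) / 2 := by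
    intro N
    induction N with
    | zero => simp
    | succ N ih =>
      have hn : (0:ℝ) ≤ N := N.cast_nonneg
      rw [Finset.sum_range_succ, Finset.sum_range_succ, Complex.ofReal_add, ih]
      simp only [F, cotTerm]
      rw [Real.rpow_neg_one, Real.rpow_neg_one]
      push_cast
      have e : (a:ℂ) - (N + 1) = -(N + 1 - a) := by ring
      rw [e, one_div (-_), inv_neg]
      ring
  have hp4 := ((hp2.const_add (1 / (a:ℂ))).sub hp3).div_const 2
  rw [tendsto_nhds_unique hp1 (hp4.congr fun N => (heq N).symm)]
  ring

open HurwitzZeta in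
theorem aux_expZeta_zero (a : ℝ) (ha : 0 < a) (ha1 : a < 1) :
    expZeta (a : UnitAddCircle) 0 = 1 / (Complex.exp (-(2 * π * I * a)) - 1) := by
  have h := sinZeta_one_sub (a : UnitAddCircle) (s := 1) (by
    intro n hn
    have := congrArg Complex.re hn
    simp at this
    have h2 : (0:ℝ) ≤ n := n.cast_nonneg
    linarith)
  have hpi : (π : ℂ) ≠ 0 := by exact_mod_cast Real.pi_ne_zero
  rw [expZeta, cosZeta_apply_zero]
  rw [sub_self] at h
  rw [h, aux_odd_one a ha ha1, Complex.cot_pi_eq_exp_ratio]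
  have hE : Complex.exp (-(2 * π * I * a)) = (Complex.exp (2 * π * I * a))⁻¹ := Complex.exp_neg _
  have hne : Complex.exp (2 * π * I * a) ≠ 1 := by
    intro h
    rw [Complex.exp_eq_one_iff] at h
    obtain ⟨n, hn⟩ := h
    have h1 : (a:ℂ) = n := by
      have : (2 * π * I : ℂ) ≠ 0 := by simp [hpi]
      apply mul_left_cancel₀ this; rw [hn]; ring
    have h2 : a = n := by exact_mod_cast h1
    have h3 : (0 : ℤ) < n := by exact_mod_cast h2 ▸ ha
    have h4 : n < (1 : ℤ) := by exact_mod_cast h2 ▸ ha1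
    omega
  have h0 : Complex.exp (2 * π * I * a) ≠ 0 := Complex.exp_ne_zero _
  rw [hE]
  set w := Complex.exp (2 * π * I * a) with hw
  rw [mul_one, Complex.sin_pi_div_two, Complex.Gamma_one, Complex.cpow_neg_one]
  have h1 : w - 1 ≠ 0 := sub_ne_zero.2 hne
  have h2 : 1 - w ≠ 0 := sub_ne_zero.2 hne.symm
  have h3 : w⁻¹ - 1 = (1 - w) / w := by field_simp
  rw [h3]
  have h4 : I * (1 - w) ≠ 0 := mul_ne_zero I_ne_zero h2
  field_simp
  ring_nf
  try simp

/-- Coefficient in the outer sum. -/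
noncomputable def cTerm (x s : ℂ) (l : ℕ) : ℂ :=
  x ^ (l + 1) / ((l : ℂ) + 1) * ((l : ℂ) + 1) ^ (-s)

theorem cTerm_bound (x s : ℂ) (R : ℕ) (hs : ‖s‖ ≤ R) (l : ℕ) :
    ‖cTerm x s l‖ ≤ (((l + 1 : ℕ) : ℝ)) ^ R * ‖x‖ ^ (l + 1) := by
  have hl : (0:ℝ) ≤ l := l.cast_nonneg
  have e : ((l : ℂ) + 1) = (((l : ℝ) + 1 : ℝ) : ℂ) := by push_cast; rfl
  rw [cTerm, norm_mul, norm_div, norm_pow, e, Complex.norm_cpow_eq_rpow_re_of_pos (by linarith),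
    Complex.norm_real, Real.norm_of_nonneg (by linarith), mul_comm]
  push_cast
  apply mul_le_mul
  · rw [← Real.rpow_natCast]
    apply Real.rpow_le_rpow_of_exponent_le (by linarith)
    have := Complex.abs_re_le_norm s
    have := neg_abs_le s.re
    simp; linarith
  · apply div_le_self (by positivity) (by linarith)
  · positivity
  · positivity

theorem cTerm_bound_summable (x : ℂ) (hx : ‖x‖ < 1) (R : ℕ) :
    Summable (fun l : ℕ => (((l + 1 : ℕ) : ℝ)) ^ R * ‖x‖ ^ (l + 1)) :=
  (summable_nat_add_iff 1).2 (summable_pow_mul_geometric_of_norm_lt_one R (r := ‖x‖) (by simpa using hx))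

theorem cTerm_summable (x : ℂ) (hx : ‖x‖ < 1) (s : ℂ) : Summable (fun l => ‖cTerm x s l‖) := by
  obtain ⟨R, hR⟩ := exists_nat_ge ‖s‖
  exact Summable.of_nonneg_of_le (fun _ => norm_nonneg _) (cTerm_bound x s R hR)
    (cTerm_bound_summable x hx R)

theorem cTerm_ite_summable (x : ℂ) (hx : ‖x‖ < 1) (s : ℂ) (P : ℕ → Prop) [DecidablePred P] :
    Summable (fun l => ‖if P l then cTerm x s l else 0‖) := by
  refine Summable.of_nonneg_of_le (fun _ => norm_nonneg _) (fun l => ?_) (cTerm_summable x hx s)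
  split_ifs <;> simp

theorem cTerm_tsum_differentiable (x : ℂ) (hx : ‖x‖ < 1) (P : ℕ → Prop) [DecidablePred P] :
    Differentiable ℂ (fun s => ∑' l, if P l then cTerm x s l else 0) := by
  intro s
  obtain ⟨R, hR⟩ := exists_nat_gt ‖s‖
  have := Complex.differentiableOn_tsum_of_summable_norm (U := Metric.ball (0:ℂ) R)
    (F := fun l s => if P l then cTerm x s l else 0) (cTerm_bound_summable x hx R) (fun l => ?_)
    Metric.isOpen_ball (fun l w hw => ?_)
  · exact this.differentiableAt (Metric.isOpen_ball.mem_nhds (by simpa using hR))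
  · split_ifs
    · have h0 : ((l:ℂ) + 1) ≠ 0 := by exact_mod_cast l.succ_ne_zero
      intro w _
      apply DifferentiableAt.differentiableWithinAt
      unfold cTerm
      exact (differentiableAt_id.neg.const_cpow (Or.inl h0)).const_mul _
    · exact differentiableOn_const _
  · have hb := cTerm_bound x w R (by simpa using (Metric.mem_ball.1 hw).le) l
    split_ifs
    · exact hb
    · simp only [norm_zero]; positivity

theorem tsum_dvd (k : ℕ) (hk : 0 < k) (f : ℕ → ℂ) :
    ∑' l : ℕ, (if k ∣ l + 1 then f (l + 1) else 0) = ∑' j : ℕ, f (k * (j + 1)) := by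
  have hpos : ∀ j : ℕ, k * (j + 1) - 1 + 1 = k * (j + 1) := fun j =>
    Nat.sub_add_cancel (Nat.mul_pos hk j.succ_pos)
  have hinj : Function.Injective (fun j : ℕ => k * (j + 1) - 1) := by
    intro i j hij
    have h1 := hpos i
    have h2 := hpos j
    dsimp only at hij
    rw [hij, h2] at h1
    have := Nat.eq_of_mul_eq_mul_left hk h1
    omega
  rw [← hinj.tsum_eq]
  · congr 1; ext j
    simp [hpos]
  · intro l hl
    have : k ∣ l + 1 := by
      by_contra h
      simp [h] at hl
    obtain ⟨j, hj⟩ := this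
    rcases j with _ | j
    · simp at hj
    · exact ⟨j, by simp only; omega⟩

theorem exp_period (h k m l : ℕ) (hk : 0 < k) :
    Complex.exp (2 * π * I * (((l % k : ℕ) * h / k : ℝ) : ℂ) * m) =
      Complex.exp (2 * π * I * l * m * h / k) := by
  have hk' : (k:ℂ) ≠ 0 := by exact_mod_cast hk.ne'
  rw [Complex.exp_eq_exp_iff_exists_int]
  refine ⟨-((l / k * h * m : ℕ) : ℤ), ?_⟩
  have e : (l:ℂ) = ((l % k : ℕ):ℂ) + k * ((l / k : ℕ) : ℂ) := by
    exact_mod_cast (Nat.mod_add_div l k).symm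
  rw [e]
  generalize l / k = q
  push_cast
  field_simp
  ring

open HurwitzZeta in
/-- exponential zeta function attached to the residue class `r`. -/
noncomputable def EZ (h k r : ℕ) (s : ℂ) : ℂ := expZeta (((r * h / k : ℝ)) : UnitAddCircle) s

open HurwitzZeta in
theorem EZ_zero (h k : ℕ) (s : ℂ) : EZ h k 0 s = riemannZeta s := by
  unfold EZ
  rw [← expZeta_zero]
  simp

theorem EZ_coe_ne (h k r : ℕ) (hk : 0 < k) (hco : Nat.Coprime h k) (hr : ¬ k ∣ r) :
    (((r * h / k : ℝ)) : UnitAddCircle) ≠ 0 := by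
  intro h0
  rw [AddCircle.coe_eq_zero_iff] at h0
  obtain ⟨n, hn⟩ := h0
  have hk' : (k:ℝ) ≠ 0 := by exact_mod_cast hk.ne'
  simp only [zsmul_eq_mul, mul_one] at hn
  rw [eq_div_iff hk'] at hn
  have h1 : n * (k:ℤ) = r * h := by exact_mod_cast hn
  have h2 : (k:ℤ) ∣ (r:ℤ) * h := ⟨n, by rw [← h1]; ring⟩
  have h3 : k ∣ r * h := by exact_mod_cast h2
  exact hr (hco.symm.dvd_of_dvd_mul_right h3)

open HurwitzZeta in
theorem EZ_at_zero (h k l : ℕ) (hk : 0 < k) (hco : Nat.Coprime h k) (hr : ¬ k ∣ l) :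
    EZ h k (l % k) 0 = 1 / (Complex.exp (-(2 * π * I * l * h / k)) - 1) := by
  have hk' : (k:ℝ) ≠ 0 := by exact_mod_cast hk.ne'
  have hkp : (0:ℝ) < k := by exact_mod_cast hk
  -- reduce modulo one
  set r := (l % k * h) with hrdef
  have hndvd : ¬ k ∣ r := by
    intro hd
    exact hr ((Nat.dvd_mod_iff (dvd_refl k)).1 (hco.symm.dvd_of_dvd_mul_right hd))
  have hpos : 0 < r % k := Nat.pos_of_ne_zero fun h0 => hndvd (Nat.dvd_of_mod_eq_zero h0)
  have hlt : r % k < k := Nat.mod_lt _ hk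
  have e : (r:ℝ) = ((r % k : ℕ):ℝ) + k * ((r / k : ℕ) : ℝ) := by
    exact_mod_cast (Nat.mod_add_div r k).symm
  have hco' : ((((l % k : ℕ) : ℝ) * h / k : ℝ) : UnitAddCircle) = (((r % k : ℕ) / k : ℝ) : UnitAddCircle) := by
    have : ((l % k : ℕ) : ℝ) * h / k = ((r % k : ℕ) / k : ℝ) + ((r / k : ℕ) : ℤ) • (1:ℝ) := by
      rw [show ((l % k : ℕ) : ℝ) * h = (r:ℝ) by rw [hrdef]; push_cast; rfl, e]
      generalize r / k = q
      simp only [zsmul_eq_mul]; push_cast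
      field_simp
    rw [this, AddCircle.coe_add, AddCircle.coe_zsmul]
    have h1 : ((1:ℝ) : UnitAddCircle) = 0 := AddCircle.coe_period 1
    rw [h1]; simp
  unfold EZ
  rw [hco', aux_expZeta_zero _ (by positivity) (by rw [div_lt_one hkp]; exact_mod_cast hlt)]
  congr 2
  rw [Complex.exp_neg, Complex.exp_neg]
  congr 1
  have h1 := exp_period h k 1 l hk
  have h2 := exp_period 1 k 1 r hk
  have h3 : (r:ℂ) = ((l % k : ℕ):ℂ) * h := by rw [hrdef]; push_cast; rfl
  push_cast at h1 h2 ⊢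
  simp only [mul_one] at h1 h2
  rw [← h1, h2, h3]
  congr 1; ring

open Topology in
/-- `(s-1) ζ(s)` made entire. -/
theorem zeta_entire : Differentiable ℂ (Function.update (fun s => (s - 1) * riemannZeta s) 1 1) := by
  have hne : ∀ s : ℂ, s ≠ 1 → DifferentiableAt ℂ (Function.update (fun s => (s - 1) * riemannZeta s) 1 1) s := by
    intro s hs
    have h1 : DifferentiableAt ℂ (fun s => (s - 1) * riemannZeta s) s :=
      (differentiableAt_id.sub_const 1).mul (differentiableAt_riemannZeta hs)
    refine h1.congr_of_eventuallyEq ?_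
    filter_upwards [isOpen_ne.mem_nhds hs] with t ht
    simp [Function.update_of_ne ht]
  intro s
  by_cases hs : s = 1
  · subst hs
    refine (Complex.analyticAt_of_differentiable_on_punctured_nhds_of_continuousAt ?_ ?_).differentiableAt
    · filter_upwards [self_mem_nhdsWithin] with t ht using hne t ht
    · rw [continuousAt_update_same]
      exact riemannZeta_residue_one
  · exact hne s hs

/-- The sum over one residue class. -/
noncomputable def AZ (k : ℕ) (x : ℂ) (r : ℕ) (s : ℂ) : ℂ :=
  ∑' l : ℕ, if (l + 1) % k = r then cTerm x s l else 0

theorem Qterm_eq (h k : ℕ) (hk : 0 < k) (x s : ℂ) (p : ℕ × ℕ) :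
    Qterm h k x s p = ∑ r ∈ Finset.range k,
      (Complex.exp (2 * π * I * ((r * h / k : ℝ) : ℂ) * (p.1 + 1 : ℕ)) / ((p.1 + 1 : ℕ) : ℂ) ^ s) *
      (if (p.2 + 1) % k = r then cTerm x s p.2 else 0) := by
  obtain ⟨m, l⟩ := p
  simp only [mul_ite, mul_zero]
  rw [Finset.sum_ite_eq (Finset.range k), if_pos (Finset.mem_range.2 (Nat.mod_lt _ hk)),
    exp_period h k (m + 1) (l + 1) hk]
  unfold Qterm cTerm
  have hm : ((l:ℂ) + 1) * (m + 1) = (((l:ℝ) + 1 : ℝ) : ℂ) * (((m:ℝ) + 1 : ℝ) : ℂ) := by push_cast; rfl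
  rw [hm, Complex.mul_cpow_ofReal_nonneg (by positivity) (by positivity), Complex.cpow_neg (((m:ℝ) + 1 : ℝ) : ℂ)]
  push_cast
  ring

open HurwitzZeta in
theorem inner_hasSum (h k r : ℕ) (s : ℂ) (hs : 1 < s.re) :
    HasSum (fun m : ℕ => Complex.exp (2 * π * I * ((r * h / k : ℝ) : ℂ) * (m + 1 : ℕ)) / ((m + 1 : ℕ) : ℂ) ^ s)
      (EZ h k r s) := by
  have h1 := hasSum_expZeta_of_one_lt_re (r * h / k : ℝ) hs
  rw [← hasSum_nat_add_iff' 1] at h1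
  have hs0 : s ≠ 0 := by rintro rfl; simp at hs; linarith
  simpa [EZ, Complex.zero_cpow hs0] using h1

theorem norm_inner (a : ℝ) (m : ℕ) (s : ℂ) :
    ‖Complex.exp (2 * π * I * (a : ℂ) * (m + 1 : ℕ)) / ((m + 1 : ℕ) : ℂ) ^ s‖ =
      1 / ((m + 1 : ℕ) : ℝ) ^ s.re := by
  rw [norm_div, Complex.norm_natCast_cpow_of_pos m.succ_pos]
  congr 1
  rw [Complex.norm_exp]
  simp

theorem norm_inner_summable (a : ℝ) (s : ℂ) (hs : 1 < s.re) :
    Summable (fun m : ℕ => ‖Complex.exp (2 * π * I * (a : ℂ) * (m + 1 : ℕ)) / ((m + 1 : ℕ) : ℂ) ^ s‖) := by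
  simp only [norm_inner]
  exact (summable_nat_add_iff 1).2 (Real.summable_one_div_nat_rpow.2 hs)

theorem AZ_diff (k : ℕ) (x : ℂ) (hx : ‖x‖ < 1) :
    ∀ r, Differentiable ℂ (AZ k x r) := fun r =>
    cTerm_tsum_differentiable x hx (fun l => (l + 1) % k = r)

theorem sumP (h k : ℕ) (x : ℂ) (hx : ‖x‖ < 1) :
    ∀ s : ℂ, 1 < s.re → ∀ r : ℕ, Summable (fun p : ℕ × ℕ => ‖
      (Complex.exp (2 * π * I * ((r * h / k : ℝ) : ℂ) * (p.1 + 1 : ℕ)) / ((p.1 + 1 : ℕ) : ℂ) ^ s) *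
      (if (p.2 + 1) % k = r then cTerm x s p.2 else 0)‖) := fun s hs r =>
    Summable.mul_norm
      (f := fun m : ℕ => Complex.exp (2 * π * I * ((r * h / k : ℝ) : ℂ) * (m + 1 : ℕ)) / ((m + 1 : ℕ) : ℂ) ^ s)
      (g := fun l : ℕ => if (l + 1) % k = r then cTerm x s l else 0)
      (norm_inner_summable (r * h / k : ℝ) s hs)
      (cTerm_ite_summable x hx s (fun l => (l + 1) % k = r))

theorem p1 (h k : ℕ) (hhk : h < k) (hco : Nat.Coprime h k)
    (x : ℂ) (hx : ‖x‖ < 1) (s : ℂ) (hs : 1 < s.re) :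
    Summable (fun p : ℕ × ℕ => ‖Qterm h k x s p‖) := by
  have hk : 0 < k := by omega
  have hk' : (k:ℂ) ≠ 0 := by exact_mod_cast hk.ne'
  have hsumP := sumP h k x hx
  refine Summable.of_nonneg_of_le (fun _ => norm_nonneg _) (fun p => ?_)
    (summable_sum (s := Finset.range k) fun r _ => hsumP s hs r)
  rw [Qterm_eq h k hk]
  exact norm_sum_le _ _

theorem p2 (h k : ℕ) (hhk : h < k) (hco : Nat.Coprime h k)
    (x : ℂ) (hx : ‖x‖ < 1) :
    DifferentiableOn ℂ (fun s => ∑ r ∈ Finset.range k, EZ h k r s * AZ k x r s) {(1 : ℂ)}ᶜ := by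
  have hk : 0 < k := by omega
  have hk' : (k:ℂ) ≠ 0 := by exact_mod_cast hk.ne'
  have hA := AZ_diff k x hx
  intro s hs
  apply DifferentiableAt.differentiableWithinAt
  refine DifferentiableAt.fun_sum fun r _ => ?_
  exact (HurwitzZeta.differentiableAt_expZeta _ s (Or.inl hs)).mul (hA r s)

theorem p3 (h k : ℕ) (hhk : h < k) (hco : Nat.Coprime h k)
    (x : ℂ) (hx : ‖x‖ < 1) :
    ∀ s : ℂ, 1 < s.re → HasSum (fun p : ℕ × ℕ => Qterm h k x s p) (∑ r ∈ Finset.range k, EZ h k r s * AZ k x r s) := by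
  have hk : 0 < k := by omega
  have hk' : (k:ℂ) ≠ 0 := by exact_mod_cast hk.ne'
  have hsumP := sumP h k x hx
  intro s hs
  simp only [Qterm_eq h k hk]
  refine hasSum_sum fun r _ => ?_
  have h2 : HasSum (fun l : ℕ => if (l + 1) % k = r then cTerm x s l else 0) (AZ k x r s) :=
    (cTerm_ite_summable x hx s (fun l => (l + 1) % k = r)).of_norm.hasSum
  have h1 := inner_hasSum h k r s hs
  have h3 := (hsumP s hs r).of_norm
  exact HasSum.mul
    (f := fun m : ℕ => Complex.exp (2 * π * I * ((r * h / k : ℝ) : ℂ) * (m + 1 : ℕ)) / ((m + 1 : ℕ) : ℂ) ^ s)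
    (g := fun l : ℕ => if (l + 1) % k = r then cTerm x s l else 0) h1 h2 h3

theorem p4 (h k : ℕ) (hhk : h < k) (hco : Nat.Coprime h k)
    (x : ℂ) (hx : ‖x‖ < 1) :
    ∃ g : ℂ → ℂ, Differentiable ℂ g ∧ (∀ s : ℂ, s ≠ 1 → g s = (s - 1) * ∑ r ∈ Finset.range k, EZ h k r s * AZ k x r s) ∧
        g 1 = dilog (x ^ k) / (k : ℂ) ^ 2 := by
  have hk : 0 < k := by omega
  have hk' : (k:ℂ) ≠ 0 := by exact_mod_cast hk.ne'
  have hA := AZ_diff k x hx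
  refine ⟨fun s => ∑ r ∈ Finset.range k, (if r = 0 then
    Function.update (fun s => (s - 1) * riemannZeta s) 1 1 s else (s - 1) * EZ h k r s) * AZ k x r s, ?_, ?_, ?_⟩
  · intro s
    refine DifferentiableAt.fun_sum fun r hr => ?_
    refine DifferentiableAt.fun_mul ?_ (hA r s)
    split_ifs with h0
    · exact zeta_entire s
    · refine (differentiableAt_id.sub_const 1).mul
        (HurwitzZeta.differentiableAt_expZeta _ s (Or.inr (EZ_coe_ne h k r hk hco ?_)))
      intro hd
      exact h0 (Nat.eq_zero_of_dvd_of_lt hd (Finset.mem_range.1 hr))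
  · intro s hs
    simp only
    rw [Finset.mul_sum]
    refine Finset.sum_congr rfl fun r _ => ?_
    split_ifs with h0
    · subst h0
      rw [Function.update_of_ne hs, EZ_zero]; ring
    · ring
  · simp only [sub_self, zero_mul, Function.update_self]
    simp only [ite_mul, one_mul, zero_mul]
    rw [Finset.sum_ite_eq' (Finset.range k), if_pos (Finset.mem_range.2 hk)]
    unfold AZ dilog
    have := tsum_dvd k hk (fun n => x ^ n / n * (n:ℂ) ^ (-1:ℂ))
    simp only [← Nat.dvd_iff_mod_eq_zero]
    simp only [cTerm]
    push_cast at this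
    rw [this, ← tsum_div_const]
    congr 1; ext j
    have hj : (j:ℂ) + 1 ≠ 0 := by exact_mod_cast j.succ_ne_zero
    rw [Complex.cpow_neg_one, pow_mul]
    field_simp

theorem p5 (h k : ℕ) (hhk : h < k) (hco : Nat.Coprime h k)
    (x : ℂ) (hx : ‖x‖ < 1) :
    ∑ r ∈ Finset.range k, EZ h k r 0 * AZ k x r 0 = (1 / (2 * (k : ℂ))) * Complex.log (1 - x ^ k) +
        ∑' l : ℕ, (if k ∣ (l + 1) then 0 else
          x ^ (l + 1) / (l + 1) *
            (1 / (Complex.exp (-(2 * Real.pi * Complex.I * (l + 1) * h / k)) - 1))) := by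
  have hk : 0 < k := by omega
  have hk' : (k:ℂ) ≠ 0 := by exact_mod_cast hk.ne'
  have hc0 : ∀ l, cTerm x 0 l = x ^ (l + 1) / ((l:ℂ) + 1) := by
    intro l; simp [cTerm]
  -- combine residue classes
  have e1 : ∑ r ∈ Finset.range k, EZ h k r 0 * AZ k x r 0 =
      ∑' l : ℕ, EZ h k ((l + 1) % k) 0 * cTerm x 0 l := by
    unfold AZ
    simp only [← tsum_mul_left]
    rw [← Summable.tsum_finsetSum fun r _ => ((cTerm_ite_summable x hx 0 _).of_norm).mul_left _]
    congr 1; ext l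
    simp only [mul_ite, mul_zero]
    rw [Finset.sum_ite_eq (Finset.range k), if_pos (Finset.mem_range.2 (Nat.mod_lt _ hk))]
  have hs1 : Summable (fun l : ℕ => if k ∣ l + 1 then (-1/2 : ℂ) * cTerm x 0 l else 0) := by
    have := ((cTerm_ite_summable x hx 0 (fun l => k ∣ l + 1)).of_norm).mul_left (-1/2 : ℂ)
    simpa only [mul_ite, mul_zero] using this
  have hs0 : Summable (fun l : ℕ => EZ h k ((l + 1) % k) 0 * cTerm x 0 l) := by
    have : Summable (fun l : ℕ => ∑ r ∈ Finset.range k, EZ h k r 0 * (if (l + 1) % k = r then cTerm x 0 l else 0)) :=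
      summable_sum fun r _ => ((cTerm_ite_summable x hx 0 _).of_norm).mul_left _
    refine this.congr fun l => ?_
    simp only [mul_ite, mul_zero]
    rw [Finset.sum_ite_eq (Finset.range k), if_pos (Finset.mem_range.2 (Nat.mod_lt _ hk))]
  have hz : EZ h k 0 0 = -1/2 := by rw [EZ_zero, riemannZeta_zero]
  have e2 : ∀ l : ℕ, (if k ∣ (l + 1) then 0 else
        x ^ (l + 1) / ((l:ℂ) + 1) *
          (1 / (Complex.exp (-(2 * Real.pi * Complex.I * (l + 1) * h / k)) - 1))) =
      EZ h k ((l + 1) % k) 0 * cTerm x 0 l - (if k ∣ l + 1 then (-1/2 : ℂ) * cTerm x 0 l else 0) := by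
    intro l
    split_ifs with hd
    · rw [Nat.mod_eq_zero_of_dvd hd, hz]; ring
    · rw [EZ_at_zero h k (l + 1) hk hco hd, hc0]; push_cast; ring
  have e3 : ∑' l : ℕ, (if k ∣ l + 1 then (-1/2 : ℂ) * cTerm x 0 l else 0) =
      (1 / (2 * (k : ℂ))) * Complex.log (1 - x ^ k) := by
    have := tsum_dvd k hk (fun n => (-1/2 : ℂ) * (x ^ n / n))
    simp only [hc0]
    push_cast at this
    rw [this]
    have hxk : ‖x ^ k‖ < 1 := by
      rw [norm_pow]; exact pow_lt_one₀ (norm_nonneg _) hx hk.ne'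
    have hl := (Complex.hasSum_taylorSeries_neg_log' hxk).mul_left (-1 / (2 * (k:ℂ)))
    rw [show (1 / (2 * (k : ℂ))) * Complex.log (1 - x ^ k) = -1 / (2 * (k:ℂ)) * -Complex.log (1 - x ^ k) by ring, ← hl.tsum_eq]
    congr 1; ext j
    have hj : (j:ℂ) + 1 ≠ 0 := by exact_mod_cast j.succ_ne_zero
    rw [pow_mul]
    field_simp
  rw [e1]
  simp only [e2]
  rw [hs0.tsum_sub hs1, e3]
  ring

theorem Qhk_analytic_continuation (h k : ℕ) (hhk : h < k) (hco : Nat.Coprime h k)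
    (x : ℂ) (hx : ‖x‖ < 1) :
    (∀ s : ℂ, 1 < s.re → Summable (fun p : ℕ × ℕ => ‖Qterm h k x s p‖)) ∧
    ∃ Qt : ℂ → ℂ, DifferentiableOn ℂ Qt {(1 : ℂ)}ᶜ ∧
      (∀ s : ℂ, 1 < s.re → HasSum (fun p : ℕ × ℕ => Qterm h k x s p) (Qt s)) ∧
      (∃ g : ℂ → ℂ, Differentiable ℂ g ∧ (∀ s : ℂ, s ≠ 1 → g s = (s - 1) * Qt s) ∧
        g 1 = dilog (x ^ k) / (k : ℂ) ^ 2) ∧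
      Qt 0 = (1 / (2 * (k : ℂ))) * Complex.log (1 - x ^ k) +
        ∑' l : ℕ, (if k ∣ (l + 1) then 0 else
          x ^ (l + 1) / (l + 1) *
            (1 / (Complex.exp (-(2 * Real.pi * Complex.I * (l + 1) * h / k)) - 1))) := by
  exact ⟨p1 h k hhk hco x hx, fun s => ∑ r ∈ Finset.range k, EZ h k r s * AZ k x r s, p2 h k hhk hco x hx, p3 h k hhk hco x hx,
    p4 h k hhk hco x hx, p5 h k hhk hco x hx⟩
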